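/- arXiv:1903.06066 — 5 statements merged into one kernel-verified Lean document; each statement's English description precedes it below -/
import Mathlib

section
/- Assume the Setting. Then for every n ∈ {1,...,N} it holds P-almost surely that P(∩_{k=0}^{n} A_k | σ(Y_0)) = E[ p_n(Y_{n−1}) · 1_{{𝒱(Y_{n−1}) ≥ c^{(Σ_{l=0}^{n−2} α^l)} · 𝒱(Y_0)^{(α^{n−1})}}} · 1_{∩_{k=0}^{n−1} A_k} | σ(Y_0) ] (with the empty sum Σ_{l=0}^{−1} α^l = 0). -/
open MeasureTheory ProbabilityTheory
open scoped ENNReal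

/-!
`Y_{n-1}` and `A_0, …, A_{n-1}` are determined by `Y_0, Z_1, …, Z_{n-1}`, hence independent of
`Z_n`. Conditioning on that history therefore freezes `Y_{n-1}` in the event `A_n` and averages
over `Z_n` only, which turns `1_{A_n}` into `p_n(Y_{n-1})`; the tower property then passes to
`σ(Y_0)`. The extra indicator is free: iterating `𝒱(Y_k) ≥ c 𝒱(Y_{k-1})^α` shows that the lower
bound on `𝒱(Y_{n-1})` already holds on `A_0 ∩ ⋯ ∩ A_{n-1}`.
-/

section Independence

variable {Ω : Type*} {m₁ m₂ m₃ mΩ : MeasurableSpace Ω} {μ : Measure Ω}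

theorem generateFrom_image2_inter_eq_sup :
    MeasurableSpace.generateFrom
      (Set.image2 (· ∩ ·) {s | MeasurableSet[m₁] s} {s | MeasurableSet[m₂] s}) = m₁ ⊔ m₂ := by
  apply le_antisymm
  · refine MeasurableSpace.generateFrom_le ?_
    rintro _ ⟨s, hs, t, ht, rfl⟩
    have hs' : MeasurableSet[m₁ ⊔ m₂] s := (le_sup_left : m₁ ≤ m₁ ⊔ m₂) s hs
    have ht' : MeasurableSet[m₁ ⊔ m₂] t := (le_sup_right : m₂ ≤ m₁ ⊔ m₂) t ht
    exact hs'.inter ht'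
  · refine sup_le (fun s hs => ?_) (fun t ht => ?_)
    · exact MeasurableSpace.measurableSet_generateFrom
        ⟨s, hs, Set.univ, MeasurableSet.univ, Set.inter_univ s⟩
    · exact MeasurableSpace.measurableSet_generateFrom
        ⟨Set.univ, MeasurableSet.univ, t, ht, Set.univ_inter t⟩

theorem isPiSystem_image2_inter {α : Type*} {S T : Set (Set α)} (hS : IsPiSystem S)
    (hT : IsPiSystem T) : IsPiSystem (Set.image2 (· ∩ ·) S T) := by
  rintro _ ⟨s, hs, t, ht, rfl⟩ _ ⟨s', hs', t', ht', rfl⟩ hne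
  rw [Set.inter_inter_inter_comm] at hne ⊢
  exact ⟨_, hS s hs s' hs' hne.left, _, hT t ht t' ht' hne.right, rfl⟩

theorem indep_sup_left [IsZeroOrProbabilityMeasure μ] (hm₁ : m₁ ≤ mΩ) (hm₂ : m₂ ≤ mΩ)
    (hm₃ : m₃ ≤ mΩ) (h : Indep m₁ (m₂ ⊔ m₃) μ) (h₂₃ : Indep m₂ m₃ μ) :
    Indep (m₁ ⊔ m₂) m₃ μ := by
  refine IndepSets.indep (sup_le hm₁ hm₂) hm₃
    (isPiSystem_image2_inter (@MeasurableSpace.isPiSystem_measurableSet Ω m₁)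
      (@MeasurableSpace.isPiSystem_measurableSet Ω m₂))
    (@MeasurableSpace.isPiSystem_measurableSet Ω m₃) generateFrom_image2_inter_eq_sup.symm
    (@MeasurableSpace.generateFrom_measurableSet Ω m₃).symm ?_
  rw [IndepSets_iff]
  rintro _ u ⟨s, hs, t, ht, rfl⟩ hu
  have ht' : MeasurableSet[m₂ ⊔ m₃] t := (le_sup_left : m₂ ≤ m₂ ⊔ m₃) t ht
  have hu' : MeasurableSet[m₂ ⊔ m₃] u := (le_sup_right : m₃ ≤ m₂ ⊔ m₃) u hu
  rw [Indep_iff] at h h₂₃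
  calc μ (s ∩ t ∩ u) = μ s * μ (t ∩ u) := by rw [Set.inter_assoc, h s _ hs (ht'.inter hu')]
    _ = μ s * μ t * μ u := by rw [h₂₃ t u ht hu, mul_assoc]
    _ = μ (s ∩ t) * μ u := by rw [h s t hs ht']

end Independence

section Freezing

variable {Ω H U E : Type*} [MeasurableSpace H] [mU : MeasurableSpace U]
  {𝒢 m mΩ : MeasurableSpace Ω} {μ : Measure Ω} [IsFiniteMeasure μ] {X : Ω → H} {Z : Ω → U}

theorem map_prodMk_restrict_eq_prod (hm : m ≤ mΩ) (hX : Measurable[m] X) (hZ : Measurable Z)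
    (hind : Indep m (mU.comap Z) μ) {B : Set Ω} (hB : MeasurableSet[m] B) :
    (μ.restrict B).map (fun ω => (X ω, Z ω)) = ((μ.restrict B).map X).prod (μ.map Z) := by
  refine (Measure.prod_eq fun s t hs ht => ?_).symm
  have hX' : Measurable X := hX.mono hm le_rfl
  have hXB : MeasurableSet[m] (X ⁻¹' s ∩ B) := (hX hs).inter hB
  rw [Measure.map_apply (hX'.prodMk hZ) (hs.prod ht), Measure.map_apply hX' hs,
    Measure.map_apply hZ ht, Measure.restrict_apply (hX'.prodMk hZ (hs.prod ht)),
    Measure.restrict_apply (hX' hs), ← (Indep_iff _ _ _).1 hind _ _ hXB ⟨t, ht, rfl⟩,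
    Set.mk_preimage_prod, Set.inter_right_comm]

theorem condExp_comp_prodMk_of_indep [NormedAddCommGroup E] [NormedSpace ℝ E] [CompleteSpace E]
    (hm : m ≤ mΩ) (hX : Measurable[m] X) (hZ : Measurable Z) (hind : Indep m (mU.comap Z) μ)
    {f : H × U → E} (hf : StronglyMeasurable f) (hint : Integrable (fun ω => f (X ω, Z ω)) μ) :
    μ[fun ω => f (X ω, Z ω) | m] =ᵐ[μ] fun ω => ∫ u, f (X ω, u) ∂(μ.map Z) := by
  have hX' : Measurable X := hX.mono hm le_rfl
  have hXZ : Measurable fun ω => (X ω, Z ω) := hX'.prodMk hZ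
  have hg : StronglyMeasurable fun x => ∫ u, f (x, u) ∂(μ.map Z) := hf.integral_prod_right'
  have hint_prod : ∀ B, MeasurableSet[m] B →
      Integrable f (((μ.restrict B).map X).prod (μ.map Z)) := fun B hB => by
    rw [← map_prodMk_restrict_eq_prod hm hX hZ hind hB,
      integrable_map_measure hf.aestronglyMeasurable hXZ.aemeasurable]
    exact hint.integrableOn
  refine (ae_eq_condExp_of_forall_setIntegral_eq hm hint (fun B hB _ => ?_) (fun B hB _ => ?_)
    (hg.comp_measurable hX).aestronglyMeasurable).symm
  · exact (hint_prod B hB).integral_prod_left.comp_measurable hX'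
  · calc ∫ ω in B, ∫ u, f (X ω, u) ∂(μ.map Z) ∂μ
        = ∫ x, ∫ u, f (x, u) ∂(μ.map Z) ∂((μ.restrict B).map X) :=
          (integral_map hX'.aemeasurable hg.aestronglyMeasurable).symm
      _ = ∫ z, f z ∂(((μ.restrict B).map X).prod (μ.map Z)) :=
          (integral_prod f (hint_prod B hB)).symm
      _ = ∫ ω in B, f (X ω, Z ω) ∂μ := by
          rw [← map_prodMk_restrict_eq_prod hm hX hZ hind hB,
            integral_map hXZ.aemeasurable hf.aestronglyMeasurable]

theorem condExp_indicator_preimage_prodMk_of_indep (hm : m ≤ mΩ) (hX : Measurable[m] X)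
    (hZ : Measurable Z) (hind : Indep m (mU.comap Z) μ) {Q : Set (H × U)} (hQ : MeasurableSet Q) :
    μ[((fun ω => (X ω, Z ω)) ⁻¹' Q).indicator (fun _ => (1 : ℝ)) | m]
      =ᵐ[μ] fun ω => μ.real {ω' | (X ω, Z ω') ∈ Q} := by
  have hXZ : Measurable fun ω => (X ω, Z ω) := (hX.mono hm le_rfl).prodMk hZ
  refine (condExp_comp_prodMk_of_indep hm hX hZ hind
    (f := Q.indicator fun _ => (1 : ℝ)) (stronglyMeasurable_const.indicator hQ)
    ((integrable_const (1 : ℝ)).indicator (hXZ hQ))).trans (.of_forall fun ω => ?_)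
  calc ∫ u, Q.indicator (fun _ => (1 : ℝ)) (X ω, u) ∂(μ.map Z)
      = (μ.map Z).real (Prod.mk (X ω) ⁻¹' Q) := integral_indicator_one (measurable_prodMk_left hQ)
    _ = μ.real {ω' | (X ω, Z ω') ∈ Q} := map_measureReal_apply hZ (measurable_prodMk_left hQ)

theorem condExp_indicator_inter_preimage_prodMk_of_indep (h𝒢 : 𝒢 ≤ m) (hm : m ≤ mΩ)
    (hX : Measurable[m] X) (hZ : Measurable Z) (hind : Indep m (mU.comap Z) μ) {B : Set Ω}
    (hB : MeasurableSet[m] B) {Q : Set (H × U)} (hQ : MeasurableSet Q) :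
    μ[(B ∩ (fun ω => (X ω, Z ω)) ⁻¹' Q).indicator (fun _ => (1 : ℝ)) | 𝒢]
      =ᵐ[μ] μ[B.indicator (fun ω => μ.real {ω' | (X ω, Z ω') ∈ Q}) | 𝒢] := by
  set C : Set Ω := (fun ω => (X ω, Z ω)) ⁻¹' Q
  have hCmeas : MeasurableSet C := ((hX.mono hm le_rfl).prodMk hZ) hQ
  have hfreeze : μ[(B ∩ C).indicator (fun _ => (1 : ℝ)) | m]
      =ᵐ[μ] B.indicator fun ω => μ.real {ω' | (X ω, Z ω') ∈ Q} := by
    rw [← Set.indicator_indicator]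
    exact (condExp_indicator ((integrable_const (1 : ℝ)).indicator hCmeas) hB).trans
      (condExp_indicator_preimage_prodMk_of_indep hm hX hZ hind hQ).indicator
  exact (condExp_condExp_of_le h𝒢 hm).symm.trans (condExp_congr_ae hfreeze)

end Freezing

section History

variable {Ω H U : Type*} [mH : MeasurableSpace H] [mU : MeasurableSpace U]

/-- The σ-algebra `σ(X, Z_1, …, Z_n)` of the past at time `n` of a chain started at `X` and driven
by the noise `Z`, which is indexed from `1`. -/
abbrev history (X : Ω → H) (Z : ℕ → Ω → U) (n : ℕ) : MeasurableSpace Ω :=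
  mH.comap X ⊔ ⨆ k ∈ Finset.Icc 1 n, mU.comap (Z k)

variable {X : Ω → H} {Z : ℕ → Ω → U} {n N : ℕ}

theorem history_mono : Monotone (history X Z) := fun _ _ h =>
  sup_le_sup_left (biSup_mono fun _ hk => Finset.Icc_subset_Icc_right h hk) _

theorem comap_le_history : mH.comap X ≤ history X Z n := le_sup_left

theorem measurable_history_noise (hn : 1 ≤ n) : Measurable[history X Z n] (Z n) :=
  measurable_iff_comap_le.2 <| le_sup_of_le_right <|
    le_iSup₂_of_le n (Finset.mem_Icc.2 ⟨hn, le_rfl⟩) le_rfl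

theorem history_le [mΩ : MeasurableSpace Ω] (hX : Measurable X)
    (hZ : ∀ k, 1 ≤ k → k ≤ n → Measurable (Z k)) : history X Z n ≤ mΩ :=
  sup_le hX.comap_le <| iSup₂_le fun k hk =>
    (hZ k (Finset.mem_Icc.1 hk).1 (Finset.mem_Icc.1 hk).2).comap_le

theorem measurable_history_chain {Φ : H → U → H} (hΦ : Measurable (Function.uncurry Φ))
    {Y : ℕ → Ω → H} (hY : ∀ k, 1 ≤ k → k ≤ n → ∀ ω, Y k ω = Φ (Y (k - 1) ω) (Z k ω)) :
    Measurable[history (Y 0) Z n] (Y n) := by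
  induction n with
  | zero => exact measurable_iff_comap_le.2 comap_le_history
  | succ n ih =>
    have hpast : Measurable[history (Y 0) Z (n + 1)] (Y n) :=
      (ih fun k hk hkn => hY k hk (hkn.trans n.le_succ)).mono (history_mono n.le_succ) le_rfl
    have hnoise : Measurable[history (Y 0) Z (n + 1)] (Z (n + 1)) :=
      measurable_history_noise n.succ_pos
    rw [show Y (n + 1) = fun ω => Φ (Y n ω) (Z (n + 1) ω) from
      funext (hY (n + 1) n.succ_pos le_rfl)]
    exact hΦ.comp (hpast.prodMk hnoise)

theorem measurableSet_history_biInter_Iic {Φ : H → U → H}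
    (hΦ : Measurable (Function.uncurry Φ)) {Y : ℕ → Ω → H}
    (hY : ∀ k, 1 ≤ k → k ≤ n → ∀ ω, Y k ω = Φ (Y (k - 1) ω) (Z k ω)) {A : ℕ → Set Ω} {S : Set H}
    (hS : MeasurableSet S) (hA0 : A 0 = Y 0 ⁻¹' S) {G : ℕ → Set (H × H)}
    (hG : ∀ k < n, MeasurableSet (G k))
    (hA : ∀ k < n, A (k + 1) = (fun ω => (Y k ω, Y (k + 1) ω)) ⁻¹' G k) :
    MeasurableSet[history (Y 0) Z n] (⋂ k ∈ Finset.Iic n, A k) := by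
  simp only [Finset.mem_Iic]
  induction n with
  | zero =>
    simp only [Nat.le_zero_eq, Set.iInter_iInter_eq_left, hA0]
    exact measurable_history_chain (n := 0) hΦ hY hS
  | succ n ih =>
    have hY' : ∀ k, 1 ≤ k → k ≤ n → ∀ ω, Y k ω = Φ (Y (k - 1) ω) (Z k ω) :=
      fun k hk hkn => hY k hk (hkn.trans n.le_succ)
    have hpast : MeasurableSet[history (Y 0) Z (n + 1)] (⋂ k ≤ n, A k) :=
      history_mono n.le_succ _ <| ih hY' (fun k hk => hG k (hk.trans n.lt_succ_self))
        fun k hk => hA k (hk.trans n.lt_succ_self)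
    have hYn : Measurable[history (Y 0) Z (n + 1)] (Y n) :=
      (measurable_history_chain hΦ hY').mono (history_mono n.le_succ) le_rfl
    have hnext : MeasurableSet[history (Y 0) Z (n + 1)] (A (n + 1)) := by
      rw [hA n n.lt_succ_self]
      exact hYn.prodMk (measurable_history_chain hΦ hY) (hG n n.lt_succ_self)
    rw [Set.biInter_le_succ]
    exact hpast.inter hnext

theorem indep_biSup_Icc_comap_of_iIndepFun [mΩ : MeasurableSpace Ω] {μ : Measure Ω}
    (hZ : ∀ k, 1 ≤ k → k ≤ N → Measurable (Z k))
    (hZindep : iIndepFun (fun k : Finset.Icc 1 N => Z (k : ℕ)) μ) (hn : n < N) :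
    Indep (⨆ k ∈ Finset.Icc 1 n, mU.comap (Z k)) (mU.comap (Z (n + 1))) μ := by
  have hle : ∀ k : Finset.Icc 1 N, mU.comap (Z k) ≤ mΩ := fun k =>
    (hZ k (Finset.mem_Icc.1 k.2).1 (Finset.mem_Icc.1 k.2).2).comap_le
  have hdisj : Disjoint {k : Finset.Icc 1 N | (k : ℕ) ≤ n} {k | (k : ℕ) = n + 1} :=
    Set.disjoint_left.2 fun k hk hk' => by simp only [Set.mem_ofPred_eq] at hk hk'; omega
  have hsplit := indep_iSup_of_disjoint hle ((iIndepFun_iff_iIndep _ _ _).1 hZindep) hdisj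
  refine indep_of_indep_of_le_right (indep_of_indep_of_le_left hsplit ?_) ?_
  · refine iSup₂_le fun k hk => ?_
    obtain ⟨hk1, hkn⟩ := Finset.mem_Icc.1 hk
    let i : Finset.Icc 1 N := ⟨k, Finset.mem_Icc.2 ⟨hk1, hkn.trans hn.le⟩⟩
    exact le_iSup₂ (f := fun (j : Finset.Icc 1 N) (_ : (j : ℕ) ≤ n) => mU.comap (Z j)) i hkn
  · let i : Finset.Icc 1 N := ⟨n + 1, Finset.mem_Icc.2 ⟨n.succ_pos, hn⟩⟩
    exact le_iSup₂ (f := fun (j : Finset.Icc 1 N) (_ : (j : ℕ) = n + 1) => mU.comap (Z j)) i rfl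

theorem indep_history_succ [MeasurableSpace Ω] {μ : Measure Ω} [IsZeroOrProbabilityMeasure μ]
    (hX : Measurable X) (hZ : ∀ k, 1 ≤ k → k ≤ N → Measurable (Z k))
    (hZindep : iIndepFun (fun k : Finset.Icc 1 N => Z (k : ℕ)) μ)
    (hXZ : Indep (mH.comap X) (⨆ k ∈ Finset.Icc 1 N, mU.comap (Z k)) μ) (hn : n < N) :
    Indep (history X Z n) (mU.comap (Z (n + 1))) μ := by
  refine indep_sup_left hX.comap_le ?_ (hZ _ n.succ_pos hn).comap_le
    (indep_of_indep_of_le_right hXZ (sup_le ?_ ?_))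
    (indep_biSup_Icc_comap_of_iIndepFun hZ hZindep hn)
  · exact iSup₂_le fun k hk =>
      (hZ k (Finset.mem_Icc.1 hk).1 ((Finset.mem_Icc.1 hk).2.trans hn.le)).comap_le
  · exact biSup_mono fun k hk => Finset.Icc_subset_Icc_right hn.le hk
  · exact le_iSup₂_of_le (n + 1) (Finset.mem_Icc.2 ⟨n.succ_pos, hn⟩) le_rfl

theorem condExp_indicator_inter_transition {𝒢 mΩ : MeasurableSpace Ω} {μ : Measure Ω}
    [IsZeroOrProbabilityMeasure μ] {Φ : H → U → H} (hΦ : Measurable (Function.uncurry Φ))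
    {Y : ℕ → Ω → H} (hY0 : Measurable (Y 0))
    (hY : ∀ k, 1 ≤ k → k ≤ N → ∀ ω, Y k ω = Φ (Y (k - 1) ω) (Z k ω))
    (hZ : ∀ k, 1 ≤ k → k ≤ N → Measurable (Z k))
    (hZindep : iIndepFun (fun k : Finset.Icc 1 N => Z (k : ℕ)) μ)
    (hYZ : Indep (mH.comap (Y 0)) (⨆ k ∈ Finset.Icc 1 N, mU.comap (Z k)) μ) (hn : n < N)
    (h𝒢 : 𝒢 ≤ history (Y 0) Z n) {B : Set Ω} (hB : MeasurableSet[history (Y 0) Z n] B)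
    {G : Set (H × H)} (hG : MeasurableSet G) :
    μ[(B ∩ (fun ω => (Y n ω, Y (n + 1) ω)) ⁻¹' G).indicator (fun _ => (1 : ℝ)) | 𝒢]
      =ᵐ[μ] μ[B.indicator (fun ω => μ.real {ω' | (Y n ω, Φ (Y n ω) (Z (n + 1) ω')) ∈ G}) | 𝒢] := by
  have hpast : history (Y 0) Z n ≤ mΩ :=
    history_le hY0 fun k hk hkn => hZ k hk (hkn.trans hn.le)
  have hYn : Measurable[history (Y 0) Z n] (Y n) :=
    measurable_history_chain hΦ fun k hk hkn => hY k hk (hkn.trans hn.le)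
  have hQ : MeasurableSet ((fun x : H × U => (x.1, Φ x.1 x.2)) ⁻¹' G) :=
    (measurable_fst.prodMk hΦ) hG
  rw [show Y (n + 1) = fun ω => Φ (Y n ω) (Z (n + 1) ω) from
    funext (hY (n + 1) n.succ_pos hn)]
  exact condExp_indicator_inter_preimage_prodMk_of_indep h𝒢 hpast hYn (hZ _ n.succ_pos hn)
    (indep_history_succ hY0 hZ hZindep hYZ hn) hB hQ

end History

section Growth

theorem rpow_geom_sum_mul_rpow_pow_le {c α : ℝ} (hc : 0 ≤ c) (hα : 0 ≤ α) {x : ℕ → ℝ}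
    (hx : 0 ≤ x 0) {n : ℕ} (hstep : ∀ k < n, c * x k ^ α ≤ x (k + 1)) :
    c ^ (∑ l ∈ Finset.range n, α ^ l) * x 0 ^ (α ^ n) ≤ x n := by
  induction n with
  | zero => simp
  | succ n ih =>
    set s := ∑ l ∈ Finset.range n, α ^ l
    have hs : 0 ≤ s := Finset.sum_nonneg fun l _ => pow_nonneg hα l
    have hcs : 0 ≤ c ^ s := Real.rpow_nonneg hc s
    have hxn : 0 ≤ x 0 ^ (α ^ n) := Real.rpow_nonneg hx _
    calc c ^ (∑ l ∈ Finset.range (n + 1), α ^ l) * x 0 ^ (α ^ (n + 1))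
        = c ^ (s * α + 1) * x 0 ^ (α ^ n * α) := by rw [geom_sum_succ, mul_comm α, pow_succ]
      _ = c * (c ^ s * x 0 ^ (α ^ n)) ^ α := by
        rw [Real.mul_rpow hcs hxn, ← Real.rpow_mul hc, ← Real.rpow_mul hx,
          Real.rpow_add_of_nonneg hc (mul_nonneg hs hα) zero_le_one, Real.rpow_one]
        ring
      _ ≤ c * x n ^ α := by
        gcongr
        exact ih fun k hk => hstep k (hk.trans n.lt_succ_self)
      _ ≤ x (n + 1) := hstep n n.lt_succ_self

variable {H : Type*}

/-- The pairs `(v, w)` for which a step from `v` to `w` counts as growth, i.e. `𝒱(w) ≥ c 𝒱(v)^α`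
and `w ∈ S`. The event `A_n` says that `(Y_{n-1}, Y_n)` lies in this set for `S = ℍ_n`. -/
def growthSet (V : H → ℝ) (c α : ℝ) (S : Set H) : Set (H × H) :=
  {x | c * V x.1 ^ α ≤ V x.2 ∧ x.2 ∈ S}

theorem measurableSet_growthSet [MeasurableSpace H] {V : H → ℝ} (hV : Measurable V) (c α : ℝ)
    {S : Set H} (hS : MeasurableSet S) : MeasurableSet (growthSet V c α S) :=
  (measurableSet_le (by fun_prop) (hV.comp measurable_snd)).inter (measurable_snd hS)

end Growth

theorem mul_indicator_one_mul_indicator_one_of_subset {α R : Type*} [MulZeroOneClass R]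
    {B L : Set α} (hBL : B ⊆ L) (f : α → R) :
    (fun a => f a * L.indicator (fun _ => (1 : R)) a * B.indicator (fun _ => (1 : R)) a)
      = B.indicator f := by
  ext a
  by_cases ha : a ∈ B
  · simp only [Set.indicator_of_mem ha, Set.indicator_of_mem (hBL ha), mul_one]
  · simp only [Set.indicator_of_notMem ha, mul_zero]

theorem conditional_probability_recursion_general
    {H U Ω : Type*} [mH : MeasurableSpace H] [mU : MeasurableSpace U] {𝒢 : MeasurableSpace Ω}
    [mΩ : MeasurableSpace Ω] (P : Measure Ω) [IsProbabilityMeasure P]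
    (Φ : H → U → H) (hΦ : Measurable (Function.uncurry Φ))
    (N : ℕ) (c α : ℝ) (hc : 0 ≤ c) (hα : 0 ≤ α)
    (Hs : ℕ → Set H) (hHs : ∀ n ≤ N, MeasurableSet (Hs n))
    (Z : ℕ → Ω → U) (hZmeas : ∀ n, 1 ≤ n → n ≤ N → Measurable (Z n))
    (hZindep : iIndepFun (fun n : (Finset.Icc 1 N) => Z (n : ℕ)) P)
    (Y : ℕ → Ω → H) (hY0meas : Measurable (Y 0))
    (hYrec : ∀ n, 1 ≤ n → n ≤ N → ∀ ω, Y n ω = Φ (Y (n - 1) ω) (Z n ω))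
    (hYZindep : Indep (mH.comap (Y 0)) (⨆ n ∈ Finset.Icc 1 N, mU.comap (Z n)) P)
    (V : H → ℝ) (hV : Measurable V) (hVpos : ∀ x, 0 ≤ V x)
    (A : ℕ → Set Ω)
    (hA0 : A 0 = {ω | Y 0 ω ∈ Hs 0})
    (hA : ∀ n, 1 ≤ n → n ≤ N →
        A n = {ω | c * V (Y (n - 1) ω) ^ α ≤ V (Y n ω) ∧ Y n ω ∈ Hs n})
    (p : ℕ → H → ℝ≥0∞)
    (hp : ∀ n, 1 ≤ n → n ≤ N → ∀ v : H,
        p n v = P {ω | c * V v ^ α ≤ V (Φ v (Z n ω)) ∧ Φ v (Z n ω) ∈ Hs n}) :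
    ∀ n, 1 ≤ n → n ≤ N → 𝒢 ≤ history (Y 0) Z (n - 1) →
      P[Set.indicator (⋂ k ∈ Finset.Iic n, A k) (fun _ => (1 : ℝ)) | 𝒢]
        =ᵐ[P]
      P[(fun ω => (p n (Y (n - 1) ω)).toReal *
          Set.indicator {ω' | c ^ (∑ l ∈ Finset.range (n - 1), α ^ l) *
              V (Y 0 ω') ^ (α ^ (n - 1)) ≤ V (Y (n - 1) ω')} (fun _ => (1 : ℝ)) ω *
          Set.indicator (⋂ k ∈ Finset.Iic (n - 1), A k) (fun _ => (1 : ℝ)) ω) | 𝒢] := by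
  intro n hn hnN h𝒢
  obtain ⟨n, rfl⟩ := Nat.exists_eq_add_of_le' hn
  rw [Nat.add_sub_cancel] at h𝒢 ⊢
  have hgrowth : ∀ k < N,
      A (k + 1) = (fun ω => (Y k ω, Y (k + 1) ω)) ⁻¹' growthSet V c α (Hs (k + 1)) :=
    fun k hk => hA (k + 1) k.succ_pos hk
  have hG : ∀ k < N, MeasurableSet (growthSet V c α (Hs (k + 1))) := fun k hk =>
    measurableSet_growthSet hV c α (hHs (k + 1) hk)
  set B : Set Ω := ⋂ k ∈ Finset.Iic n, A k with hBdef
  have hB : MeasurableSet[history (Y 0) Z n] B :=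
    measurableSet_history_biInter_Iic hΦ
      (fun k hk hkn => hYrec k hk (hkn.trans (Nat.le_of_succ_le hnN))) (hHs 0 N.zero_le) hA0
      (fun k hk => hG k (hk.trans hnN)) fun k hk => hgrowth k (hk.trans hnN)
  have hsplit : ⋂ k ∈ Finset.Iic (n + 1), A k
      = B ∩ (fun ω => (Y n ω, Y (n + 1) ω)) ⁻¹' growthSet V c α (Hs (n + 1)) := by
    simp only [hBdef, Finset.mem_Iic, Set.biInter_le_succ, hgrowth n hnN]
  have hlower : B ⊆ {ω | c ^ (∑ l ∈ Finset.range n, α ^ l) * V (Y 0 ω) ^ (α ^ n) ≤ V (Y n ω)} :=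
    fun ω hω => rpow_geom_sum_mul_rpow_pow_le hc hα (hVpos _) (x := fun k => V (Y k ω))
      fun k hk => by
        have hωA : ω ∈ A (k + 1) := Set.mem_iInter₂.1 hω _ (Finset.mem_Iic.2 hk)
        rw [hgrowth k (hk.trans hnN)] at hωA
        exact hωA.1
  have hpn : (fun ω => (p (n + 1) (Y n ω)).toReal) = fun ω => P.real
      {ω' | (Y n ω, Φ (Y n ω) (Z (n + 1) ω')) ∈ growthSet V c α (Hs (n + 1))} :=
    funext fun ω => congrArg ENNReal.toReal (hp (n + 1) hn hnN (Y n ω))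
  rw [mul_indicator_one_mul_indicator_one_of_subset hlower, hsplit, hpn]
  exact condExp_indicator_inter_transition hΦ hY0meas hYrec hZmeas hZindep hYZindep hnN h𝒢 hB
    (hG n hnN)

/-- In the abstract Markov-chain setting, for every `n ∈ {1,...,N}` the conditional probability
of `∩_{k=0}^{n} A_k` given `σ(Y_0)` equals the conditional expectation of
`p_n(Y_{n−1}) · 1_{{𝒱(Y_{n−1}) ≥ c^{Σ_{l<n−1} α^l}·𝒱(Y_0)^{α^{n−1}}}} · 1_{∩_{k=0}^{n−1} A_k}`
given `σ(Y_0)`, `P`-almost surely. -/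
theorem conditional_probability_recursion
    {H U Ω : Type*} [mH : MeasurableSpace H] [mU : MeasurableSpace U] [mΩ : MeasurableSpace Ω]
    (P : Measure Ω) [IsProbabilityMeasure P]
    (Φ : H → U → H) (hΦ : Measurable (Function.uncurry Φ))
    (N : ℕ) (hN : 1 ≤ N)
    (c α θ : ℝ) (hc0 : 0 < c) (hc1 : c ≤ 1) (hα : 1 < α) (hθ : 1 < θ)
    (Hs : ℕ → Set H) (hHs : ∀ n ≤ N, MeasurableSet (Hs n))
    (Z : ℕ → Ω → U) (hZmeas : ∀ n, 1 ≤ n → n ≤ N → Measurable (Z n))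
    (hZindep : iIndepFun (fun n : (Finset.Icc 1 N) => Z (n : ℕ)) P)
    (hZid : ∀ n, 1 ≤ n → n ≤ N → P.map (Z n) = P.map (Z 1))
    (Y : ℕ → Ω → H) (hY0meas : Measurable (Y 0))
    (hYrec : ∀ n, 1 ≤ n → n ≤ N → ∀ ω, Y n ω = Φ (Y (n - 1) ω) (Z n ω))
    (hYZindep : Indep (MeasurableSpace.comap (Y 0) mH)
        (⨆ n ∈ Finset.Icc 1 N, MeasurableSpace.comap (Z n) mU) P)
    (V : H → ℝ) (hV : Measurable V) (hVpos : ∀ x, 0 ≤ V x)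
    (A : ℕ → Set Ω)
    (hA0 : A 0 = {ω | Y 0 ω ∈ Hs 0})
    (hA : ∀ n, 1 ≤ n → n ≤ N →
        A n = {ω | c * V (Y (n - 1) ω) ^ α ≤ V (Y n ω) ∧ Y n ω ∈ Hs n})
    (p : ℕ → H → ℝ≥0∞)
    (hp : ∀ n, 1 ≤ n → n ≤ N → ∀ v : H,
        p n v = P {ω | c * V v ^ α ≤ V (Φ v (Z n ω)) ∧ Φ v (Z n ω) ∈ Hs n}) :
    ∀ n, 1 ≤ n → n ≤ N →
      P[Set.indicator (⋂ k ∈ Finset.Iic n, A k) (fun _ => (1 : ℝ)) |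
          MeasurableSpace.comap (Y 0) mH]
        =ᵐ[P]
      P[(fun ω => (p n (Y (n - 1) ω)).toReal *
          Set.indicator {ω' | c ^ (∑ l ∈ Finset.range (n - 1), α ^ l) *
              V (Y 0 ω') ^ (α ^ (n - 1)) ≤ V (Y (n - 1) ω')} (fun _ => (1 : ℝ)) ω *
          Set.indicator (⋂ k ∈ Finset.Iic (n - 1), A k) (fun _ => (1 : ℝ)) ω) |
          MeasurableSpace.comap (Y 0) mH] := by
  intro n hn hnN
  exact conditional_probability_recursion_general P Φ hΦ N c α hc0.le (zero_le_one.trans hα.le) Hs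
    hHs Z hZmeas hZindep Y hY0meas hYrec hYZindep V hV hVpos A hA0 hA p hp n hn hnN
    comap_le_history
end

section
/- Assume the Setting. Then E[𝒱(Y_N)] ≥ c^{(Σ_{k=0}^{N−1} α^k)} · E[ 𝒱(Y_0)^{(α^N)} · P( ∩_{n=0}^{N} [ {𝒱(Y_n) ≥ c^{(Σ_{k=0}^{n−1} α^k)} · 𝒱(Y_0)^{(α^n)}} ∩ {Y_n ∈ ℍ_n} ] | σ(Y_0) ) ] (with the empty sum Σ_{k=0}^{−1} α^k = 0; both sides take values in [0,∞]). -/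
open MeasureTheory ProbabilityTheory
open scoped ENNReal

/-!
Since `V (Y 0) ^ (α ^ N)` is `σ(Y 0)`-measurable, the conditional probability of the event `A`
integrates against it exactly as the indicator of `A` does, and on `A` the constraint at the
terminal time `N` bounds the resulting integrand by `V (Y N)`.
-/

section CondExp

variable {Ω : Type*} {m mΩ : MeasurableSpace Ω} {μ : Measure Ω}

theorem trim_withDensity_condLExp (hm : m ≤ mΩ) [SigmaFinite (μ.trim hm)] (X : Ω → ℝ≥0∞) :
    (μ.withDensity μ⁻[X|m]).trim hm = (μ.withDensity X).trim hm := by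
  refine @Measure.ext _ m _ _ fun s hs => ?_
  rw [trim_measurableSet_eq hm hs, trim_measurableSet_eq hm hs, withDensity_apply _ (hm s hs),
    withDensity_apply _ (hm s hs), setLIntegral_condLExp hm μ X hs]

theorem lintegral_mul_condLExp (hm : m ≤ mΩ) [SigmaFinite (μ.trim hm)] {f X : Ω → ℝ≥0∞}
    (hf : Measurable[m] f) (hX : AEMeasurable X μ) :
    ∫⁻ ω, f ω * μ⁻[X|m] ω ∂μ = ∫⁻ ω, f ω * X ω ∂μ := by
  have hf' : Measurable f := hf.mono hm le_rfl
  calc ∫⁻ ω, f ω * μ⁻[X|m] ω ∂μ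
      = ∫⁻ ω, f ω ∂(μ.withDensity μ⁻[X|m]) := by
        rw [lintegral_withDensity_eq_lintegral_mul _ (measurable_condLExp' m μ X) hf']
        simp only [Pi.mul_apply, mul_comm]
    _ = ∫⁻ ω, f ω ∂(μ.withDensity X) := by
        rw [← lintegral_trim hm hf, trim_withDensity_condLExp hm, lintegral_trim hm hf]
    _ = ∫⁻ ω, f ω * X ω ∂μ := by
        rw [lintegral_withDensity_eq_lintegral_mul₀ hX hf'.aemeasurable]
        simp only [Pi.mul_apply, mul_comm]

theorem lintegral_mul_ofReal_condExp (hm : m ≤ mΩ) [SigmaFinite (μ.trim hm)] {f : Ω → ℝ≥0∞}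
    {X : Ω → ℝ} (hf : Measurable[m] f) (hX : Integrable X μ) (hX0 : 0 ≤ᵐ[μ] X) :
    ∫⁻ ω, f ω * ENNReal.ofReal (μ[X|m] ω) ∂μ = ∫⁻ ω, f ω * ENNReal.ofReal (X ω) ∂μ := by
  rw [← lintegral_mul_condLExp hm hf hX.aemeasurable.ennreal_ofReal]
  refine lintegral_congr_ae ?_
  filter_upwards [condLExp_ofReal m hX hX0] with ω hω
  rw [hω]

theorem lintegral_mul_ofReal_condExp_indicator (hm : m ≤ mΩ) [SigmaFinite (μ.trim hm)]
    {f : Ω → ℝ≥0∞} {A : Set Ω} (hf : Measurable[m] f) (hA : MeasurableSet A) (hμA : μ A ≠ ∞) :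
    ∫⁻ ω, f ω * ENNReal.ofReal (μ[A.indicator fun _ => (1 : ℝ)|m] ω) ∂μ = ∫⁻ ω in A, f ω ∂μ := by
  have hint : Integrable (A.indicator fun _ => (1 : ℝ)) μ :=
    (integrable_indicator_iff hA).2 (integrableOn_const hμA)
  have hnonneg : 0 ≤ A.indicator fun _ => (1 : ℝ) :=
    Set.indicator_nonneg fun _ _ => zero_le_one
  rw [lintegral_mul_ofReal_condExp hm hf hint (.of_forall hnonneg), ← lintegral_indicator hA]
  refine lintegral_congr fun ω => ?_
  by_cases hω : ω ∈ A <;> simp [hω]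

theorem lintegral_mul_ofReal_condExp_indicator_le (hm : m ≤ mΩ) [SigmaFinite (μ.trim hm)]
    {f g : Ω → ℝ≥0∞} {A : Set Ω} (hf : Measurable[m] f) (hA : MeasurableSet A) (hμA : μ A ≠ ∞)
    (hfg : ∀ ω ∈ A, f ω ≤ g ω) :
    ∫⁻ ω, f ω * ENNReal.ofReal (μ[A.indicator fun _ => (1 : ℝ)|m] ω) ∂μ ≤ ∫⁻ ω, g ω ∂μ :=
  calc ∫⁻ ω, f ω * ENNReal.ofReal (μ[A.indicator fun _ => (1 : ℝ)|m] ω) ∂μ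
      = ∫⁻ ω in A, f ω ∂μ := lintegral_mul_ofReal_condExp_indicator hm hf hA hμA
    _ ≤ ∫⁻ ω in A, g ω ∂μ := setLIntegral_mono' hA hfg
    _ ≤ ∫⁻ ω, g ω ∂μ := setLIntegral_le_lintegral A g

end CondExp

theorem measurable_of_recurrence {H U Ω : Type*} [MeasurableSpace H] [MeasurableSpace U]
    [MeasurableSpace Ω] {Φ : ℕ → H → U → H} {N : ℕ} {Y : ℕ → Ω → H} {Z : ℕ → Ω → U}
    (hΦ : ∀ n < N, Measurable (Function.uncurry (Φ n))) (hZ : ∀ n < N, Measurable (Z (n + 1)))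
    (hY0 : Measurable (Y 0)) (hY : ∀ n < N, ∀ ω, Y (n + 1) ω = Φ n (Y n ω) (Z (n + 1) ω)) :
    ∀ n ≤ N, Measurable (Y n) := by
  intro n
  induction n with
  | zero => exact fun _ => hY0
  | succ n ih =>
    intro hn
    rw [funext (hY n hn)]
    exact (hΦ n hn).comp ((ih (Nat.le_of_succ_le hn)).prodMk (hZ n hn))

theorem reverse_a_priori_bound_general {H Ω : Type*} [MeasurableSpace H]
    {m mΩ : MeasurableSpace Ω} (P : Measure Ω) [IsFiniteMeasure P] (hm : m ≤ mΩ)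
    {N : ℕ} {c : ℝ} (α : ℝ) (hc : 0 ≤ c)
    {Hs : ℕ → Set H} (hHs : ∀ n ≤ N, MeasurableSet (Hs n))
    {Y : ℕ → Ω → H} (hY0 : Measurable[m] (Y 0)) (hY : ∀ n ≤ N, Measurable (Y n))
    {V : H → ℝ} (hV : Measurable V) (hVpos : ∀ x, 0 ≤ V x) :
    ENNReal.ofReal (c ^ (∑ k ∈ Finset.range N, α ^ k)) *
        ∫⁻ ω, ENNReal.ofReal (V (Y 0 ω) ^ (α ^ N) *
          (P[Set.indicator (⋂ n ∈ Finset.Iic N,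
              {ω' | c ^ (∑ k ∈ Finset.range n, α ^ k) * V (Y 0 ω') ^ (α ^ n) ≤ V (Y n ω') ∧
                Y n ω' ∈ Hs n}) (fun _ => (1 : ℝ)) | m]) ω) ∂P ≤
      ∫⁻ ω, ENNReal.ofReal (V (Y N ω)) ∂P := by
  set A : Set Ω := ⋂ n ∈ Finset.Iic N,
    {ω | c ^ (∑ k ∈ Finset.range n, α ^ k) * V (Y 0 ω) ^ (α ^ n) ≤ V (Y n ω) ∧ Y n ω ∈ Hs n}
  have hA : MeasurableSet A := Finset.measurableSet_biInter _ fun n hn => by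
    have hn : n ≤ N := Finset.mem_Iic.1 hn
    exact (measurableSet_le (((hV.comp (hY 0 N.zero_le)).pow_const _).const_mul _)
      (hV.comp (hY n hn))).inter (hY n hn (hHs n hn))
  have hterminal : ∀ ω ∈ A, ENNReal.ofReal
      (c ^ (∑ k ∈ Finset.range N, α ^ k) * V (Y 0 ω) ^ (α ^ N)) ≤ ENNReal.ofReal (V (Y N ω)) :=
    fun ω hω => ENNReal.ofReal_le_ofReal
      (Set.mem_iInter₂.1 hω N (Finset.mem_Iic.2 le_rfl)).1
  have hbound : Measurable[m] fun ω =>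
      ENNReal.ofReal (c ^ (∑ k ∈ Finset.range N, α ^ k) * V (Y 0 ω) ^ (α ^ N)) :=
    (((hV.comp hY0).pow_const _).const_mul _).ennreal_ofReal
  rw [← lintegral_const_mul' _ _ ENNReal.ofReal_ne_top]
  refine le_of_eq_of_le (lintegral_congr fun ω => ?_)
    (lintegral_mul_ofReal_condExp_indicator_le hm hbound hA (measure_ne_top P A) hterminal)
  rw [ENNReal.ofReal_mul (Real.rpow_nonneg (hVpos _) _),
    ENNReal.ofReal_mul (Real.rpow_nonneg hc _), mul_assoc]

/-- Reverse a priori bound: in the abstract Markov-chain setting,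
`E[𝒱(Y_N)] ≥ c^{Σ_{k<N} α^k} · E[𝒱(Y_0)^{α^N} · P(∩_{n=0}^{N} [{𝒱(Y_n) ≥
c^{Σ_{k<n} α^k}·𝒱(Y_0)^{α^n}} ∩ {Y_n ∈ ℍ_n}] | σ(Y_0))]`. -/
theorem reverse_a_priori_bound
    {H U Ω : Type*} [mH : MeasurableSpace H] [mU : MeasurableSpace U] [mΩ : MeasurableSpace Ω]
    (P : Measure Ω) [IsProbabilityMeasure P]
    (Φ : H → U → H) (hΦ : Measurable (Function.uncurry Φ))
    (N : ℕ) (hN : 1 ≤ N)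
    (c α θ : ℝ) (hc0 : 0 < c) (hc1 : c ≤ 1) (hα : 1 < α) (hθ : 1 < θ)
    (Hs : ℕ → Set H) (hHs : ∀ n ≤ N, MeasurableSet (Hs n))
    (Z : ℕ → Ω → U) (hZmeas : ∀ n, 1 ≤ n → n ≤ N → Measurable (Z n))
    (hZindep : iIndepFun (fun n : (Finset.Icc 1 N) => Z (n : ℕ)) P)
    (hZid : ∀ n, 1 ≤ n → n ≤ N → P.map (Z n) = P.map (Z 1))
    (Y : ℕ → Ω → H) (hY0meas : Measurable (Y 0))
    (hYrec : ∀ n, 1 ≤ n → n ≤ N → ∀ ω, Y n ω = Φ (Y (n - 1) ω) (Z n ω))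
    (hYZindep : Indep (MeasurableSpace.comap (Y 0) mH)
        (⨆ n ∈ Finset.Icc 1 N, MeasurableSpace.comap (Z n) mU) P)
    (V : H → ℝ) (hV : Measurable V) (hVpos : ∀ x, 0 ≤ V x) :
    ENNReal.ofReal (c ^ (∑ k ∈ Finset.range N, α ^ k)) *
        ∫⁻ ω, ENNReal.ofReal (V (Y 0 ω) ^ (α ^ N) *
          (P[Set.indicator (⋂ n ∈ Finset.Iic N,
              {ω' | c ^ (∑ k ∈ Finset.range n, α ^ k) * V (Y 0 ω') ^ (α ^ n) ≤ V (Y n ω') ∧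
                Y n ω' ∈ Hs n}) (fun _ => (1 : ℝ)) |
              MeasurableSpace.comap (Y 0) mH]) ω) ∂P ≤
      ∫⁻ ω, ENNReal.ofReal (V (Y N ω)) ∂P :=
  reverse_a_priori_bound_general P hY0meas.comap_le α hc0.le hHs (comap_measurable (Y 0))
    (measurable_of_recurrence (fun _ _ => hΦ)
      (fun n hn => hZmeas (n + 1) n.succ_pos hn) hY0meas
      fun n hn => hYrec (n + 1) n.succ_pos hn) hV hVpos
end

section
/- Assume the Setting. Then E[𝒱(Y_N)] ≥ θ^{(α^N)} · P( {Y_0 ∈ ℍ_0} ∩ {𝒱(Y_0) ≥ c^{1/(1−α)}·θ} ) · [ Π_{n=1}^{N} inf( { P( {𝒱(Φ(v,Z_1)) ≥ c·𝒱(v)^α} ∩ {Φ(v,Z_1) ∈ ℍ_n} ) : v ∈ ℍ_{n−1} with 𝒱(v) ≥ θ^{(α^{n−1})} } ∪ {1} ) ] (both sides take values in [0,∞]). -/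
open MeasureTheory ProbabilityTheory
open scoped ENNReal

/-!
With `κ = c ^ (1 / (1 - α)) ≥ 1`, the fixed point of `t ↦ c * t ^ α`, the levels
`t n = κ * θ ^ (α ^ n)` satisfy `t (n + 1) = c * t n ^ α`. So if `V (Y n) ≥ t n` and the next step
multiplies in the sense `V (Y (n + 1)) ≥ c * V (Y n) ^ α`, then `V (Y (n + 1)) ≥ t (n + 1)`.
Because `Y n` is independent of the noise `Z (n + 1)`, Fubini turns the one-step probabilities,
bounded below uniformly in the current state, into a product bound for
`P (Y N ∈ Hs N, V (Y N) ≥ t N)`; Markov's inequality with `t N ≥ θ ^ (α ^ N)` concludes.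
-/

section Threshold

/-- The level `t n` that `V (Y n)` has to exceed: the solution of the recursion
`t (n + 1) = c * t n ^ α` with initial value `t 0 = c ^ (1 / (1 - α)) * θ`. -/
noncomputable def growthThreshold (c α θ : ℝ) (n : ℕ) : ℝ :=
  c ^ (1 / (1 - α)) * θ ^ (α ^ n)

variable {c α θ : ℝ}

lemma growthThreshold_zero (c α θ : ℝ) : growthThreshold c α θ 0 = c ^ (1 / (1 - α)) * θ := by
  rw [growthThreshold, pow_zero, Real.rpow_one]

lemma growthThreshold_nonneg (hc : 0 ≤ c) (hθ : 0 ≤ θ) (n : ℕ) : 0 ≤ growthThreshold c α θ n :=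
  mul_nonneg (Real.rpow_nonneg hc _) (Real.rpow_nonneg hθ _)

lemma mul_rpow_one_div_one_sub_rpow (hc : 0 < c) (hα : α ≠ 1) :
    c * (c ^ (1 / (1 - α))) ^ α = c ^ (1 / (1 - α)) := by
  have hα' : 1 - α ≠ 0 := sub_ne_zero.2 hα.symm
  have h_exp : 1 + 1 / (1 - α) * α = 1 / (1 - α) := by field_simp; ring
  nth_rewrite 1 [← Real.rpow_one c]
  rw [← Real.rpow_mul hc.le, ← Real.rpow_add hc, h_exp]

lemma mul_growthThreshold_rpow (hc : 0 < c) (hα : α ≠ 1) (hθ : 0 ≤ θ) (n : ℕ) :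
    c * growthThreshold c α θ n ^ α = growthThreshold c α θ (n + 1) := by
  unfold growthThreshold
  rw [Real.mul_rpow (Real.rpow_nonneg hc.le _) (Real.rpow_nonneg hθ _), ← mul_assoc,
    mul_rpow_one_div_one_sub_rpow hc hα, ← Real.rpow_mul hθ, pow_succ]

lemma rpow_pow_le_growthThreshold (hκ : 1 ≤ c ^ (1 / (1 - α))) (hθ : 0 ≤ θ) (n : ℕ) :
    θ ^ (α ^ n) ≤ growthThreshold c α θ n :=
  le_mul_of_one_le_left (Real.rpow_nonneg hθ _) hκ

lemma growthThreshold_succ_le (hc : 0 < c) (hα₀ : 0 ≤ α) (hα₁ : α ≠ 1) (hθ : 0 ≤ θ) {n : ℕ}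
    {x y : ℝ} (hx : growthThreshold c α θ n ≤ x) (hxy : c * x ^ α ≤ y) :
    growthThreshold c α θ (n + 1) ≤ y := by
  rw [← mul_growthThreshold_rpow hc hα₁ hθ]
  refine le_trans ?_ hxy
  gcongr
  exact growthThreshold_nonneg hc.le hθ n

end Threshold

section Independence

variable {H U Ω : Type*} [mH : MeasurableSpace H] [mU : MeasurableSpace U]
  {mΩ : MeasurableSpace Ω} {P : Measure Ω}

lemma sup_eq_generateFrom_image2_inter (m₁ m₂ : MeasurableSpace Ω) :
    m₁ ⊔ m₂ = MeasurableSpace.generateFrom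
      (Set.image2 (· ∩ ·) {s | MeasurableSet[m₁] s} {t | MeasurableSet[m₂] t}) := by
  apply le_antisymm
  · refine sup_le (fun s hs => ?_) fun t ht => ?_
    · exact MeasurableSpace.measurableSet_generateFrom
        ⟨s, hs, Set.univ, MeasurableSet.univ, Set.inter_univ s⟩
    · exact MeasurableSpace.measurableSet_generateFrom
        ⟨Set.univ, MeasurableSet.univ, t, ht, Set.univ_inter t⟩
  · refine MeasurableSpace.generateFrom_le ?_
    rintro _ ⟨s, hs, t, ht, rfl⟩
    exact MeasurableSet.inter (le_sup_left (a := m₁) (b := m₂) s hs)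
      (le_sup_right (a := m₁) (b := m₂) t ht)

lemma isPiSystem_image2_inter_s7 (m₁ m₂ : MeasurableSpace Ω) :
    IsPiSystem (Set.image2 (· ∩ ·) {s | MeasurableSet[m₁] s} {t | MeasurableSet[m₂] t}) := by
  rintro _ ⟨s, hs, t, ht, rfl⟩ _ ⟨s', hs', t', ht', rfl⟩ _
  exact ⟨s ∩ s', hs.inter hs', t ∩ t', ht.inter ht', Set.inter_inter_inter_comm s s' t t'⟩

lemma indep_sup_left_of_indep_sup_right [IsZeroOrProbabilityMeasure P]
    {m₁ m₂ m₃ : MeasurableSpace Ω}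
    (h₁ : m₁ ≤ mΩ) (h₂ : m₂ ≤ mΩ) (h₃ : m₃ ≤ mΩ) (h₁₂₃ : Indep m₁ (m₂ ⊔ m₃) P)
    (h₂₃ : Indep m₂ m₃ P) : Indep (m₁ ⊔ m₂) m₃ P := by
  refine IndepSets.indep (sup_le h₁ h₂) h₃ (isPiSystem_image2_inter_s7 m₁ m₂)
    (@MeasurableSpace.isPiSystem_measurableSet Ω m₃) (sup_eq_generateFrom_image2_inter m₁ m₂)
    (@MeasurableSpace.generateFrom_measurableSet Ω m₃).symm ?_
  rw [IndepSets_iff]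
  rintro _ u ⟨s, hs, t, ht, rfl⟩ hu
  have ht' : MeasurableSet[m₂ ⊔ m₃] t := le_sup_left (a := m₂) (b := m₃) t ht
  have hu' : MeasurableSet[m₂ ⊔ m₃] u := le_sup_right (a := m₂) (b := m₃) u hu
  rw [Indep_iff] at h₁₂₃ h₂₃
  calc P (s ∩ t ∩ u) = P s * P (t ∩ u) := by
        rw [Set.inter_assoc, h₁₂₃ s (t ∩ u) hs (ht'.inter hu')]
    _ = P (s ∩ t) * P u := by rw [h₂₃ t u ht hu, h₁₂₃ s t hs ht', mul_assoc]

lemma indep_biSup_finset_of_iIndep_subtype {ι : Type*} {m : ι → MeasurableSpace Ω}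
    {I S T : Finset ι} (hm : ∀ i ∈ I, m i ≤ mΩ) (h : iIndep (fun i : I => m i) P)
    (hS : S ⊆ I) (hT : T ⊆ I) (hST : Disjoint S T) : Indep (⨆ i ∈ S, m i) (⨆ i ∈ T, m i) P := by
  have h_disj : Disjoint {i : I | (i : ι) ∈ S} {i : I | (i : ι) ∈ T} :=
    Set.disjoint_left.2 fun _ hiS hiT => Finset.disjoint_left.1 hST hiS hiT
  refine indep_of_indep_of_le_left (indep_of_indep_of_le_right
    (indep_iSup_of_disjoint (fun i : I => hm i i.2) h h_disj) ?_) ?_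
  · exact iSup₂_le fun i hi => le_iSup₂_of_le (⟨i, hT hi⟩ : I) hi le_rfl
  · exact iSup₂_le fun i hi => le_iSup₂_of_le (⟨i, hS hi⟩ : I) hi le_rfl

lemma indep_comap_of_indep_comap_sup [IsZeroOrProbabilityMeasure P] {X : Ω → H} {W : Ω → U}
    {E : Type*} [mE : MeasurableSpace E] {f : H → U → E} (hX : Measurable X) (hW : Measurable W)
    (hf : Measurable (Function.uncurry f)) {m : MeasurableSpace Ω} (hm : m ≤ mΩ)
    (hXWm : Indep (mH.comap X) (mU.comap W ⊔ m) P) (hWm : Indep (mU.comap W) m P) :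
    Indep (mE.comap fun ω => f (X ω) (W ω)) m P := by
  refine indep_of_indep_of_le_left
    (indep_sup_left_of_indep_sup_right hX.comap_le hW.comap_le hm hXWm hWm) ?_
  have hX' : Measurable[mH.comap X ⊔ mU.comap W] X := (comap_measurable X).mono le_sup_left le_rfl
  have hW' : Measurable[mH.comap X ⊔ mU.comap W] W := (comap_measurable W).mono le_sup_right le_rfl
  exact (hf.comp (hX'.prodMk hW')).comap_le

lemma measure_preimage_mul_le_measure_of_indepFun [IsFiniteMeasure P] {X : Ω → H} {W : Ω → U}
    (hX : Measurable X) (hW : Measurable W) (hXW : IndepFun X W P) {A : Set H}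
    (hA : MeasurableSet A) {S : Set (H × U)} (hS : MeasurableSet S) {q : ℝ≥0∞}
    (hq : ∀ x ∈ A, q ≤ P {ω | (x, W ω) ∈ S}) :
    P (X ⁻¹' A) * q ≤ P {ω | (X ω, W ω) ∈ S} := by
  calc P (X ⁻¹' A) * q = ∫⁻ _ in A, q ∂P.map X := by
        rw [setLIntegral_const, Measure.map_apply hX hA, mul_comm]
    _ ≤ ∫⁻ x in A, P.map W (Prod.mk x ⁻¹' S) ∂P.map X := by
        refine setLIntegral_mono' hA fun x hx => (hq x hx).trans_eq ?_
        exact (Measure.map_apply hW (measurable_prodMk_left hS)).symm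
    _ ≤ ∫⁻ x, P.map W (Prod.mk x ⁻¹' S) ∂P.map X := setLIntegral_le_lintegral A _
    _ = P.map (fun ω => (X ω, W ω)) S := by
        rw [hXW.map_prod_eq_prod_map_map hX.aemeasurable hW.aemeasurable, Measure.prod_apply hS]
    _ = P {ω | (X ω, W ω) ∈ S} := Measure.map_apply (hX.prodMk hW) hS

end Independence

section RandomRecursion

variable {H U Ω : Type*} [mH : MeasurableSpace H] [mU : MeasurableSpace U] [mΩ : MeasurableSpace Ω]

/-- The states `Y 0, …, Y N` are generated from the measurable initial state `Y 0` by measurable,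
possibly time-dependent transition maps `Φ n` driven by noise; the noise is indexed by the state it
produces, so `Z (n + 1)` drives the step from `Y n` to `Y (n + 1)`. -/
structure IsRandomRecursion (Φ : ℕ → H → U → H) (Z : ℕ → Ω → U) (Y : ℕ → Ω → H) (N : ℕ) :
    Prop where
  measurable_transition : ∀ n < N, Measurable (Function.uncurry (Φ n))
  measurable_noise : ∀ n < N, Measurable (Z (n + 1))
  measurable_zero : Measurable (Y 0)
  apply_succ : ∀ n < N, ∀ ω, Y (n + 1) ω = Φ n (Y n ω) (Z (n + 1) ω)

namespace IsRandomRecursion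

variable {P : Measure Ω} {Φ : ℕ → H → U → H} {Z : ℕ → Ω → U} {Y : ℕ → Ω → H} {N : ℕ}

lemma measurable (h : IsRandomRecursion Φ Z Y N) : ∀ n ≤ N, Measurable (Y n) := by
  intro n hn
  induction n with
  | zero => exact h.measurable_zero
  | succ n ih =>
    rw [funext (h.apply_succ n hn)]
    exact (h.measurable_transition n hn).comp ((ih (by omega)).prodMk (h.measurable_noise n hn))

lemma comap_noise_le (h : IsRandomRecursion Φ Z Y N) :
    ∀ k ∈ Finset.Ioc 0 N, mU.comap (Z k) ≤ mΩ
  | 0, hk => absurd hk (by simp)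
  | k + 1, hk => (h.measurable_noise k (Finset.mem_Ioc.1 hk).2).comap_le

lemma indep_future_noise [IsZeroOrProbabilityMeasure P] (h : IsRandomRecursion Φ Z Y N)
    (hZ : iIndepFun (fun n : Finset.Ioc 0 N => Z n) P)
    (hYZ : Indep (mH.comap (Y 0)) (⨆ k ∈ Finset.Ioc 0 N, mU.comap (Z k)) P) :
    ∀ n ≤ N, Indep (mH.comap (Y n)) (⨆ k ∈ Finset.Ioc n N, mU.comap (Z k)) P := by
  intro n hn
  induction n with
  | zero => exact hYZ
  | succ n ih =>
    have h_subset : Finset.Ioc (n + 1) N ⊆ Finset.Ioc 0 N := Finset.Ioc_subset_Ioc_left (by omega)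
    have h_split : ⨆ k ∈ Finset.Ioc n N, mU.comap (Z k) =
        mU.comap (Z (n + 1)) ⊔ ⨆ k ∈ Finset.Ioc (n + 1) N, mU.comap (Z k) := by
      rw [← Finset.insert_Ioc_add_one_left_eq_Ioc hn, Finset.iSup_insert]
    have h_noise : Indep (mU.comap (Z (n + 1)))
        (⨆ k ∈ Finset.Ioc (n + 1) N, mU.comap (Z k)) P := by
      simpa using indep_biSup_finset_of_iIndep_subtype h.comap_noise_le hZ
        (S := {n + 1}) (by simpa using hn) h_subset (by simp)
    rw [funext (h.apply_succ n hn)]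
    exact indep_comap_of_indep_comap_sup (h.measurable n (by omega)) (h.measurable_noise n hn)
      (h.measurable_transition n hn) (iSup₂_le fun k hk => h.comap_noise_le k (h_subset hk))
      (h_split ▸ ih (by omega)) h_noise

lemma indepFun_next_noise [IsZeroOrProbabilityMeasure P] (h : IsRandomRecursion Φ Z Y N)
    (hZ : iIndepFun (fun n : Finset.Ioc 0 N => Z n) P)
    (hYZ : Indep (mH.comap (Y 0)) (⨆ k ∈ Finset.Ioc 0 N, mU.comap (Z k)) P) :
    ∀ n < N, IndepFun (Y n) (Z (n + 1)) P := by
  intro n hn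
  have h_le : mU.comap (Z (n + 1)) ≤ ⨆ k ∈ Finset.Ioc n N, mU.comap (Z k) :=
    le_iSup₂_of_le (n + 1) (Finset.mem_Ioc.2 ⟨n.lt_succ_self, hn⟩) le_rfl
  exact (IndepFun_iff_Indep _ _ _).2
    (indep_of_indep_of_le_right (h.indep_future_noise hZ hYZ n hn.le) h_le)

lemma measure_preimage_mul_prod_le [IsFiniteMeasure P] (h : IsRandomRecursion Φ Z Y N)
    (hYZ : ∀ n < N, IndepFun (Y n) (Z (n + 1)) P)
    {A : ℕ → Set H} (hA : ∀ n ≤ N, MeasurableSet (A n)) {p : ℕ → ℝ≥0∞}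
    (hp : ∀ n < N, ∀ v ∈ A n, p (n + 1) ≤ P {ω | Φ n v (Z (n + 1) ω) ∈ A (n + 1)}) :
    ∀ n ≤ N, P (Y 0 ⁻¹' A 0) * ∏ k ∈ Finset.Icc 1 n, p k ≤ P (Y n ⁻¹' A n) := by
  intro n hn
  induction n with
  | zero => simp
  | succ n ih =>
    calc P (Y 0 ⁻¹' A 0) * ∏ k ∈ Finset.Icc 1 (n + 1), p k
        = P (Y 0 ⁻¹' A 0) * (∏ k ∈ Finset.Icc 1 n, p k) * p (n + 1) := by
          rw [Finset.prod_Icc_succ_top (by omega), mul_assoc]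
      _ ≤ P (Y n ⁻¹' A n) * p (n + 1) := by gcongr; exact ih (by omega)
      _ ≤ P {ω | (Y n ω, Z (n + 1) ω) ∈ Function.uncurry (Φ n) ⁻¹' A (n + 1)} :=
          measure_preimage_mul_le_measure_of_indepFun (h.measurable n (by omega))
            (h.measurable_noise n hn) (hYZ n hn) (hA n (by omega))
            (h.measurable_transition n hn (hA (n + 1) hn)) (hp n hn)
      _ = P (Y (n + 1) ⁻¹' A (n + 1)) := by rw [funext (h.apply_succ n hn)]; rfl

end IsRandomRecursion

theorem abstract_divergence_bound_general
    {P : Measure Ω} [IsFiniteMeasure P] {Φ : ℕ → H → U → H} {Z : ℕ → Ω → U} {Y : ℕ → Ω → H}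
    {N : ℕ} (h : IsRandomRecursion Φ Z Y N) (hYZ : ∀ n < N, IndepFun (Y n) (Z (n + 1)) P)
    {c α θ : ℝ} (hc : 0 < c) (hα₀ : 0 ≤ α) (hα₁ : α ≠ 1) (hκ : 1 ≤ c ^ (1 / (1 - α)))
    (hθ : 0 < θ) {Hs : ℕ → Set H} (hHs : ∀ n ≤ N, MeasurableSet (Hs n))
    {V : H → ℝ} (hV : Measurable V) {p : ℕ → ℝ≥0∞}
    (hp : ∀ n < N, ∀ v ∈ Hs n, θ ^ (α ^ n) ≤ V v → p (n + 1) ≤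
      P {ω | c * V v ^ α ≤ V (Φ n v (Z (n + 1) ω)) ∧ Φ n v (Z (n + 1) ω) ∈ Hs (n + 1)}) :
    ENNReal.ofReal (θ ^ (α ^ N)) *
        P ({ω | Y 0 ω ∈ Hs 0} ∩ {ω | c ^ (1 / (1 - α)) * θ ≤ V (Y 0 ω)}) *
        ∏ n ∈ Finset.Icc 1 N, p n ≤
      ∫⁻ ω, ENNReal.ofReal (V (Y N ω)) ∂P := by
  let A : ℕ → Set H := fun n => Hs n ∩ {v | growthThreshold c α θ n ≤ V v}
  have hA : ∀ n ≤ N, MeasurableSet (A n) := fun n hn =>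
    (hHs n hn).inter (measurableSet_le measurable_const hV)
  have h_step : ∀ n < N, ∀ v ∈ A n,
      p (n + 1) ≤ P {ω | Φ n v (Z (n + 1) ω) ∈ A (n + 1)} := fun n hn v hv =>
    (hp n hn v hv.1 ((rpow_pow_le_growthThreshold hκ hθ.le n).trans hv.2)).trans
      (measure_mono fun ω hω => ⟨hω.2, growthThreshold_succ_le hc hα₀ hα₁ hθ.le hv.2 hω.1⟩)
  have h_end : Y N ⁻¹' A N ⊆
      {ω | ENNReal.ofReal (θ ^ (α ^ N)) ≤ ENNReal.ofReal (V (Y N ω))} := fun ω hω =>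
    ENNReal.ofReal_le_ofReal ((rpow_pow_le_growthThreshold hκ hθ.le N).trans hω.2)
  rw [← growthThreshold_zero, mul_assoc]
  calc ENNReal.ofReal (θ ^ (α ^ N)) * (P (Y 0 ⁻¹' A 0) * ∏ n ∈ Finset.Icc 1 N, p n)
      ≤ ENNReal.ofReal (θ ^ (α ^ N)) * P (Y N ⁻¹' A N) := by
        gcongr; exact h.measure_preimage_mul_prod_le hYZ hA h_step N le_rfl
    _ ≤ ENNReal.ofReal (θ ^ (α ^ N)) *
          P {ω | ENNReal.ofReal (θ ^ (α ^ N)) ≤ ENNReal.ofReal (V (Y N ω))} := by gcongr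
    _ ≤ ∫⁻ ω, ENNReal.ofReal (V (Y N ω)) ∂P :=
        mul_meas_ge_le_lintegral (hV.comp (h.measurable N le_rfl)).ennreal_ofReal _

end RandomRecursion

/-- Main abstract lower bound (Proposition 2.7): in the abstract Markov-chain setting,
`E[𝒱(Y_N)] ≥ θ^{α^N} · P({Y_0 ∈ ℍ_0} ∩ {𝒱(Y_0) ≥ c^{1/(1−α)}·θ}) ·
Π_{n=1}^{N} inf({P({𝒱(Φ(v,Z_1)) ≥ c·𝒱(v)^α} ∩ {Φ(v,Z_1) ∈ ℍ_n}) :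
v ∈ ℍ_{n−1}, 𝒱(v) ≥ θ^{α^{n−1}}} ∪ {1})`. -/
theorem abstract_divergence_bound
    {H U Ω : Type*} [mH : MeasurableSpace H] [mU : MeasurableSpace U] [mΩ : MeasurableSpace Ω]
    (P : Measure Ω) [IsProbabilityMeasure P]
    (Φ : H → U → H) (hΦ : Measurable (Function.uncurry Φ))
    (N : ℕ) (hN : 1 ≤ N)
    (c α θ : ℝ) (hc0 : 0 < c) (hc1 : c ≤ 1) (hα : 1 < α) (hθ : 1 < θ)
    (Hs : ℕ → Set H) (hHs : ∀ n ≤ N, MeasurableSet (Hs n))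
    (Z : ℕ → Ω → U) (hZmeas : ∀ n, 1 ≤ n → n ≤ N → Measurable (Z n))
    (hZindep : iIndepFun (m := fun _ => mU) (fun n : (Finset.Icc 1 N) => Z (n : ℕ)) P)
    (hZid : ∀ n, 1 ≤ n → n ≤ N → P.map (Z n) = P.map (Z 1))
    (Y : ℕ → Ω → H) (hY0meas : Measurable (Y 0))
    (hYrec : ∀ n, 1 ≤ n → n ≤ N → ∀ ω, Y n ω = Φ (Y (n - 1) ω) (Z n ω))
    (hYZindep : Indep (MeasurableSpace.comap (Y 0) mH)
        (⨆ n ∈ Finset.Icc 1 N, MeasurableSpace.comap (Z n) mU) P)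
    (V : H → ℝ) (hV : Measurable V) (hVpos : ∀ x, 0 ≤ V x) :
    ENNReal.ofReal (θ ^ (α ^ N)) *
        P ({ω | Y 0 ω ∈ Hs 0} ∩ {ω | c ^ (1 / (1 - α)) * θ ≤ V (Y 0 ω)}) *
        ∏ n ∈ Finset.Icc 1 N,
          sInf (((fun v => P {ω | c * V v ^ α ≤ V (Φ v (Z 1 ω)) ∧ Φ v (Z 1 ω) ∈ Hs n}) ''
            {v | v ∈ Hs (n - 1) ∧ θ ^ (α ^ (n - 1)) ≤ V v}) ∪ {1}) ≤
      ∫⁻ ω, ENNReal.ofReal (V (Y N ω)) ∂P := by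
  have h : IsRandomRecursion (fun _ => Φ) Z Y N :=
    ⟨fun _ _ => hΦ, fun n hn => hZmeas (n + 1) n.succ_pos hn, hY0meas,
      fun n hn => hYrec (n + 1) n.succ_pos hn⟩
  have hκ : 1 ≤ c ^ (1 / (1 - α)) := Real.one_le_rpow_of_pos_of_le_one_of_nonpos hc0 hc1
    (one_div_nonpos.2 (sub_nonpos.2 hα.le))
  refine abstract_divergence_bound_general h (h.indepFun_next_noise hZindep hYZindep) hc0
    (by linarith) hα.ne' hκ (by linarith) hHs hV fun n hn v hv hVv => ?_
  have hΦv : Measurable (Φ v) := hΦ.of_uncurry_left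
  have h_growth : MeasurableSet {z | c * V v ^ α ≤ V (Φ v z) ∧ Φ v z ∈ Hs (n + 1)} :=
    (measurableSet_le measurable_const (hV.comp hΦv)).inter (hΦv (hHs (n + 1) hn))
  have h_law : IdentDistrib (Z 1) (Z (n + 1)) P P :=
    ⟨(hZmeas 1 le_rfl hN).aemeasurable, (h.measurable_noise n hn).aemeasurable,
      (hZid (n + 1) n.succ_pos hn).symm⟩
  refine (sInf_le ?_).trans_eq (h_law.measure_mem_eq h_growth)
  exact Or.inl ⟨v, ⟨hv, hVv⟩, rfl⟩
end

section
/- Let (Ω,𝓕,P) be a probability space, let T, x, η ∈ (0,∞), ν ∈ (1/4, 1], N ∈ ℕ, let γ = Σ_{n=−N}^{N} (η + 4π²n²)^{−2ν}, let v_{−N}, ..., v_N ∈ ℝ, and let β^{−N}, ..., β^{N} : Ω → ℝ be independent centered Gaussian random variables each with variance T/N. Then P( Σ_{n=−N}^{N} (η + 4π²n²)^{−2ν} · |v_n − β^n|² ≤ x² ) ≥ [ x / √(2πγT) ]^{(2N+1)} · exp( −(3N²/T) · ( Σ_{n=−N}^{N} v_n² + x²/γ ) ). -/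
open MeasureTheory ProbabilityTheory Real
open scoped ENNReal

/-!
Let `γ` be the total weight. If every `|v n - β n|` is at most `r = x / √γ`, then the weighted sum
of squares is at most `γ * r ^ 2 = x ^ 2`, so by independence the probability is at least a product
of Gaussian measures of intervals of radius `r`. Each of these is bounded below by the length
`2 * r` times a lower bound for the density on the interval, obtained from `y² ≤ 2 (v² + (y - v)²)`.
The constants of the theorem come from `T / N ≤ T` and `1 ≤ 2` in the base of the power, and from
`2 * N + 1 ≤ 3 * N` in the exponential.
-/

open scoped NNReal

lemma le_gaussianPDFReal_of_abs_sub_le (m : ℝ) (σ2 : ℝ≥0) {a r y : ℝ} (hy : |y - a| ≤ r) :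
    (√(2 * π * σ2))⁻¹ * exp (-((a - m) ^ 2 + r ^ 2) / σ2) ≤ gaussianPDFReal m σ2 y := by
  have hsq : (y - m) ^ 2 / 2 ≤ (a - m) ^ 2 + r ^ 2 := by
    have hyr : (y - a) ^ 2 ≤ r ^ 2 := sq_le_sq.mpr (hy.trans (le_abs_self r))
    have hsplit : (a - m + (y - a)) ^ 2 ≤ 2 * ((a - m) ^ 2 + (y - a) ^ 2) := add_sq_le
    rw [sub_add_sub_cancel'] at hsplit
    linarith
  rw [gaussianPDFReal, ← div_div, neg_div 2]
  gcongr

lemma le_gaussianReal_closedBall (m a r : ℝ) {σ2 : ℝ≥0} (hσ : σ2 ≠ 0) :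
    ENNReal.ofReal (2 * r / √(2 * π * σ2) * exp (-((a - m) ^ 2 + r ^ 2) / σ2)) ≤
      gaussianReal m σ2 (Metric.closedBall a r) := by
  set c := (√(2 * π * σ2))⁻¹ * exp (-((a - m) ^ 2 + r ^ 2) / σ2)
  have hc : 0 ≤ c := by positivity
  calc ENNReal.ofReal (2 * r / √(2 * π * σ2) * exp (-((a - m) ^ 2 + r ^ 2) / σ2))
      = ENNReal.ofReal c * volume (Metric.closedBall a r) := by
        rw [Real.volume_closedBall, ← ENNReal.ofReal_mul hc]
        congr 1
        ring
    _ = ∫⁻ _ in Metric.closedBall a r, ENNReal.ofReal c := (setLIntegral_const _ _).symm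
    _ ≤ ∫⁻ y in Metric.closedBall a r, gaussianPDF m σ2 y :=
        setLIntegral_mono (measurable_gaussianPDF m σ2) fun _ hy ↦
          ENNReal.ofReal_le_ofReal (le_gaussianPDFReal_of_abs_sub_le m σ2 hy)
    _ = gaussianReal m σ2 (Metric.closedBall a r) := (gaussianReal_apply m hσ _).symm

lemma le_pi_gaussianReal_closedBall {ι : Type*} [Fintype ι] (m a : ι → ℝ) {σ2 : ℝ≥0}
    (hσ : σ2 ≠ 0) {r : ℝ} (hr : 0 ≤ r) :
    ENNReal.ofReal ((2 * r / √(2 * π * σ2)) ^ Fintype.card ι *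
        exp (-((∑ i, (a i - m i) ^ 2) + Fintype.card ι * r ^ 2) / σ2)) ≤
      Measure.pi (fun i ↦ gaussianReal (m i) σ2) (Metric.closedBall a r) := by
  calc ENNReal.ofReal ((2 * r / √(2 * π * σ2)) ^ Fintype.card ι *
          exp (-((∑ i, (a i - m i) ^ 2) + Fintype.card ι * r ^ 2) / σ2))
      = ENNReal.ofReal
          (∏ i, 2 * r / √(2 * π * σ2) * exp (-((a i - m i) ^ 2 + r ^ 2) / σ2)) := by
        rw [Finset.prod_mul_distrib, Finset.prod_const, ← exp_sum, ← Finset.sum_div,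
          Finset.sum_neg_distrib, Finset.sum_add_distrib, Finset.sum_const, nsmul_eq_mul,
          Finset.card_univ]
    _ = ∏ i, ENNReal.ofReal (2 * r / √(2 * π * σ2) * exp (-((a i - m i) ^ 2 + r ^ 2) / σ2)) :=
        ENNReal.ofReal_prod_of_nonneg fun _ _ ↦ by positivity
    _ ≤ ∏ i, gaussianReal (m i) σ2 (Metric.closedBall (a i) r) :=
        Finset.prod_le_prod' fun i _ ↦ le_gaussianReal_closedBall (m i) (a i) r hσ
    _ = Measure.pi (fun i ↦ gaussianReal (m i) σ2) (Metric.closedBall a r) :=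
        (Measure.pi_closedBall _ a hr).symm

lemma sum_mul_sq_le_of_mem_closedBall {ι : Type*} [Fintype ι] {w a y : ι → ℝ} {r : ℝ}
    (hw : ∀ i, 0 ≤ w i) (hy : y ∈ Metric.closedBall a r) :
    ∑ i, w i * |a i - y i| ^ 2 ≤ (∑ i, w i) * r ^ 2 := by
  rw [Finset.sum_mul]
  gcongr with i
  · exact hw i
  · calc |a i - y i| = dist (y i) (a i) := by rw [dist_comm, Real.dist_eq]
      _ ≤ dist y a := dist_le_pi_dist y a i
      _ ≤ r := hy

lemma le_pi_gaussianReal_sum_mul_sq_le {ι : Type*} [Fintype ι] (m a : ι → ℝ) {σ2 : ℝ≥0}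
    (hσ : σ2 ≠ 0) {w : ι → ℝ} (hw : ∀ i, 0 ≤ w i) (hw_sum : 0 < ∑ i, w i) {x : ℝ} (hx : 0 ≤ x) :
    ENNReal.ofReal ((2 * x / √(2 * π * (∑ i, w i) * σ2)) ^ Fintype.card ι *
        exp (-((∑ i, (a i - m i) ^ 2) + Fintype.card ι * (x ^ 2 / ∑ i, w i)) / σ2)) ≤
      Measure.pi (fun i ↦ gaussianReal (m i) σ2) {y | ∑ i, w i * |a i - y i| ^ 2 ≤ x ^ 2} := by
  set γ := ∑ i, w i
  have hsq : (x / √γ) ^ 2 = x ^ 2 / γ := by rw [div_pow, sq_sqrt hw_sum.le]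
  have hbase : 2 * (x / √γ) / √(2 * π * σ2) = 2 * x / √(2 * π * γ * σ2) := by
    rw [mul_right_comm _ γ, sqrt_mul' _ hw_sum.le, ← mul_div_assoc, div_div, mul_comm (√γ)]
  have hsub : Metric.closedBall a (x / √γ) ⊆ {y | ∑ i, w i * |a i - y i| ^ 2 ≤ x ^ 2} :=
    fun y hy ↦ (sum_mul_sq_le_of_mem_closedBall hw hy).trans_eq <| by
      rw [hsq, mul_div_cancel₀ _ hw_sum.ne']
  rw [← hbase, ← hsq]
  exact (le_pi_gaussianReal_closedBall m a hσ (by positivity)).trans (measure_mono hsub)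

lemma le_measure_sum_mul_sq_le_of_iIndepFun {Ω ι : Type*} [MeasurableSpace Ω] {P : Measure Ω}
    [Fintype ι] {X : ι → Ω → ℝ} {m : ι → ℝ} {σ2 : ℝ≥0} (hσ : σ2 ≠ 0) (hindep : iIndepFun X P)
    (hlaw : ∀ i, HasLaw (X i) (gaussianReal (m i) σ2) P) (a : ι → ℝ) {w : ι → ℝ}
    (hw : ∀ i, 0 ≤ w i) (hw_sum : 0 < ∑ i, w i) {x : ℝ} (hx : 0 ≤ x) :
    ENNReal.ofReal ((2 * x / √(2 * π * (∑ i, w i) * σ2)) ^ Fintype.card ι *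
        exp (-((∑ i, (a i - m i) ^ 2) + Fintype.card ι * (x ^ 2 / ∑ i, w i)) / σ2)) ≤
      P {ω | ∑ i, w i * |a i - X i ω| ^ 2 ≤ x ^ 2} := by
  refine (le_pi_gaussianReal_sum_mul_sq_le m a hσ hw hw_sum hx).trans_eq
    ((hindep.hasLaw_pi hlaw).measure_eq (p := fun y ↦ ∑ i, w i * |a i - y i| ^ 2 ≤ x ^ 2) ?_).symm
  exact measurableSet_le (by fun_prop) measurable_const

lemma add_mul_div_div_le_three_mul_sq_div_mul {S q T : ℝ} {k N : ℕ} (hS : 0 ≤ S)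
    (hq : 0 ≤ q) (hT : 0 ≤ T) (hN : 1 ≤ N) (hk : k ≤ 3 * N) :
    (S + k * q) / (T / N) ≤ 3 * (N : ℝ) ^ 2 / T * (S + q) := by
  have hN' : (1 : ℝ) ≤ N := by exact_mod_cast hN
  have hk' : (k : ℝ) ≤ 3 * N := by exact_mod_cast hk
  calc (S + k * q) / (T / N) = N / T * (S + k * q) := by rw [div_div_eq_mul_div]; ring
    _ ≤ N / T * (3 * N * S + 3 * N * q) := by
        gcongr
        exact le_mul_of_one_le_left hS (by linarith)
    _ = 3 * (N : ℝ) ^ 2 / T * (S + q) := by ring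

theorem gaussian_weighted_sum_lower_bound_general
    {Ω ι : Type*} [MeasurableSpace Ω] (P : Measure Ω) {T x : ℝ} (hT : 0 < T) (hx : 0 ≤ x)
    {N : ℕ} (s : Finset ι) (hs : s.card ≤ 3 * N)
    (w : ι → ℝ) (hw : ∀ n ∈ s, 0 ≤ w n) {γ : ℝ} (hγ : γ = ∑ n ∈ s, w n) (hγ0 : 0 < γ)
    (v : ι → ℝ) (β : ι → Ω → ℝ) (hβindep : iIndepFun (fun n : s ↦ β n) P)
    (hβlaw : ∀ n ∈ s, HasLaw (β n) (gaussianReal 0 (T / N).toNNReal) P) :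
    ENNReal.ofReal ((x / √(2 * π * γ * T)) ^ s.card *
        exp (-(3 * (N : ℝ) ^ 2 / T) * ((∑ n ∈ s, v n ^ 2) + x ^ 2 / γ))) ≤
      P {ω | ∑ n ∈ s, w n * |v n - β n ω| ^ 2 ≤ x ^ 2} := by
  have hN : 1 ≤ N := by
    have hs0 := (Finset.nonempty_of_sum_ne_zero (hγ ▸ hγ0.ne')).card_pos
    omega
  have hN' : (1 : ℝ) ≤ N := by exact_mod_cast hN
  have hTN : 0 < T / N := by positivity
  have hTN' : T / N ≤ T := div_le_self hT.le hN'
  have hexp := add_mul_div_div_le_three_mul_sq_div_mul (S := ∑ n ∈ s, v n ^ 2) (q := x ^ 2 / γ)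
    (Finset.sum_nonneg fun _ _ ↦ sq_nonneg _) (by positivity) hT.le hN hs
  calc ENNReal.ofReal ((x / √(2 * π * γ * T)) ^ s.card *
          exp (-(3 * (N : ℝ) ^ 2 / T) * ((∑ n ∈ s, v n ^ 2) + x ^ 2 / γ)))
      ≤ ENNReal.ofReal ((2 * x / √(2 * π * γ * (T / N))) ^ s.card *
          exp (-((∑ n ∈ s, v n ^ 2) + s.card * (x ^ 2 / γ)) / (T / N))) := by
        rw [neg_mul, neg_div]
        gcongr
        linarith
    _ ≤ P {ω | ∑ n ∈ s, w n * |v n - β n ω| ^ 2 ≤ x ^ 2} := by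
        have hdev (ω : Ω) : ∑ n : s, w n * |v n - β n ω| ^ 2 = ∑ n ∈ s, w n * |v n - β n ω| ^ 2 :=
          Finset.sum_coe_sort s fun n ↦ w n * |v n - β n ω| ^ 2
        have hsubtype := le_measure_sum_mul_sq_le_of_iIndepFun (Real.toNNReal_pos.mpr hTN).ne'
          hβindep (fun n ↦ hβlaw n n.2) (fun n ↦ v n) (w := fun n ↦ w n) (fun n ↦ hw n n.2)
          (by rwa [Finset.sum_coe_sort s w, ← hγ]) hx
        simpa only [sub_zero, Finset.sum_coe_sort s w, Finset.sum_coe_sort s fun n ↦ v n ^ 2,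
          hdev, ← hγ, Fintype.card_coe, Real.coe_toNNReal _ hTN.le] using hsubtype

/-- Lower bound for the probability that a weighted sum of squared deviations of independent
centered Gaussian random variables (each with variance `T/N`) from given reals `v_n` is at
most `x²`. -/
theorem gaussian_weighted_sum_lower_bound
    {Ω : Type*} [MeasurableSpace Ω] (P : Measure Ω) [IsProbabilityMeasure P]
    (T x η ν : ℝ) (hT : 0 < T) (hx : 0 < x) (hη : 0 < η) (hν : 1 / 4 < ν) (hν' : ν ≤ 1)
    (N : ℕ) (hN : 1 ≤ N)
    (γ : ℝ) (hγ : γ = ∑ n ∈ Finset.Icc (-(N : ℤ)) (N : ℤ),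
        (η + 4 * π ^ 2 * (n : ℝ) ^ 2) ^ (-(2 * ν)))
    (v : ℤ → ℝ) (β : ℤ → Ω → ℝ) (hβmeas : ∀ n : ℤ, Measurable (β n))
    (hβindep : iIndepFun
        (fun n : (Finset.Icc (-(N : ℤ)) (N : ℤ)) => β (n : ℤ)) P)
    (hβlaw : ∀ n ∈ Finset.Icc (-(N : ℤ)) (N : ℤ),
        P.map (β n) = gaussianReal 0 (Real.toNNReal (T / N))) :
    ENNReal.ofReal ((x / Real.sqrt (2 * π * γ * T)) ^ (2 * N + 1) *
        Real.exp (-(3 * (N : ℝ) ^ 2 / T) *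
          ((∑ n ∈ Finset.Icc (-(N : ℤ)) (N : ℤ), v n ^ 2) + x ^ 2 / γ))) ≤
      P {ω | ∑ n ∈ Finset.Icc (-(N : ℤ)) (N : ℤ),
          (η + 4 * π ^ 2 * (n : ℝ) ^ 2) ^ (-(2 * ν)) * |v n - β n ω| ^ 2 ≤ x ^ 2} := by
  have hw (n : ℤ) : 0 < (η + 4 * π ^ 2 * (n : ℝ) ^ 2) ^ (-(2 * ν)) := by positivity
  have hcard : (Finset.Icc (-(N : ℤ)) (N : ℤ)).card = 2 * N + 1 := by rw [Int.card_Icc]; omega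
  have hγ0 : 0 < γ := hγ ▸ Finset.sum_pos (fun n _ ↦ hw n) ⟨0, by simp⟩
  simpa only [hcard] using gaussian_weighted_sum_lower_bound_general P hT hx.le _ (by omega) _
    (fun n _ ↦ (hw n).le) hγ hγ0 v β hβindep
    fun n hn ↦ ⟨(hβmeas n).aemeasurable, hβlaw n hn⟩
end

section
/- Let λ be the Lebesgue measure on (0,1), let q ∈ {2,3,...}, let v ∈ L^{2q}(λ;ℝ), let a = ∫_{(0,1)} v dλ, and let ε ∈ [0,∞) satisfy ‖v − a‖_{L^{2q}(λ;ℝ)} ≤ ε·|a| (where v − a denotes the function x ↦ v(x) − a). Then the pointwise power v^q is λ-integrable and ∫_{(0,1)} v^q dλ ≥ (2 − (1+ε)^q)·|a|^q in the sense that |∫_{(0,1)} v^q dλ| ≥ (2 − (1+ε)^q)·|a|^q whenever 2 − (1+ε)^q ≥ 0, and in general ∫_{(0,1)} |v^q| is finite and |∫_{(0,1)} v^q dλ| ≥ [2 − (1+ε)^q]·|a|^q holds with the convention that the right-hand side may be negative. -/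
open MeasureTheory
open scoped ENNReal

/-!
Write `w = v - a`. The non-constant part of the binomial expansion satisfies the pointwise bound
`‖v ^ q - a ^ q‖ ≤ (‖a‖ + ‖w‖) ^ q - ‖a‖ ^ q`. Hence no moment of `w` has to be estimated
separately: the integral of `(‖a‖ + ‖w‖) ^ q` is the `q`-th power of an `L^q` norm, which
Minkowski's inequality bounds by `(‖a‖ + ‖w‖_{L^q}) ^ q`, and `‖w‖_{L^q} ≤ ε * ‖a‖`.
-/

theorem norm_pow_sub_pow_le_add_norm_sub_pow {R : Type*} [SeminormedRing R] [NormOneClass R]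
    (x y : R) (n : ℕ) : ‖x ^ n - y ^ n‖ ≤ (‖y‖ + ‖x - y‖) ^ n - ‖y‖ ^ n := by
  induction n with
  | zero => simp
  | succ n ih =>
    have hx : ‖x ^ n‖ ≤ (‖y‖ + ‖x - y‖) ^ n :=
      (norm_pow_le x n).trans (pow_le_pow_left₀ (norm_nonneg x) (norm_le_norm_add_norm_sub' x y) n)
    calc ‖x ^ (n + 1) - y ^ (n + 1)‖ = ‖(x - y) * x ^ n + y * (x ^ n - y ^ n)‖ := by
          rw [sub_mul, mul_sub, sub_add_sub_cancel, ← pow_succ', ← pow_succ']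
      _ ≤ ‖x - y‖ * ‖x ^ n‖ + ‖y‖ * ‖x ^ n - y ^ n‖ :=
        norm_add_le_of_le (norm_mul_le _ _) (norm_mul_le _ _)
      _ ≤ ‖x - y‖ * (‖y‖ + ‖x - y‖) ^ n + ‖y‖ * ((‖y‖ + ‖x - y‖) ^ n - ‖y‖ ^ n) := by gcongr
      _ = (‖y‖ + ‖x - y‖) ^ (n + 1) - ‖y‖ ^ (n + 1) := by ring

section

variable {α : Type*} [MeasurableSpace α] {μ : Measure α} {q : ℕ}

variable {E : Type*} [NormedAddCommGroup E] {f : α → E}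

theorem lpNorm_pow_eq_integral_norm_pow (hf : AEStronglyMeasurable f μ) (hq : q ≠ 0) :
    lpNorm f q μ ^ q = ∫ x, ‖f x‖ ^ q ∂μ := by
  rw [lpNorm_eq_integral_norm_rpow_toReal (Nat.cast_ne_zero.2 hq) (ENNReal.natCast_ne_top q) hf]
  simp only [ENNReal.toReal_natCast, Real.rpow_natCast]
  exact Real.rpow_inv_natCast_pow (by positivity) hq

theorem lpNorm_const_add_norm_le [IsProbabilityMeasure μ] {p : ℝ≥0∞} {c : ℝ} (hc : 0 ≤ c)
    (hp : 1 ≤ p) (hf : AEStronglyMeasurable f μ) :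
    lpNorm (fun x ↦ c + ‖f x‖) p μ ≤ c + lpNorm f p μ := by
  calc lpNorm (fun x ↦ c + ‖f x‖) p μ ≤ lpNorm (fun _ ↦ c) p μ + lpNorm (fun x ↦ ‖f x‖) p μ :=
        lpNorm_add_le (memLp_const c) hp
    _ = c + lpNorm f p μ := by
        rw [lpNorm_const (zero_lt_one.trans_le hp).ne' (NeZero.ne μ), probReal_univ, Real.one_rpow,
          mul_one, Real.norm_of_nonneg hc, lpNorm_norm hf]

variable {A : Type*} [NormedRing A] [NormOneClass A] {v : α → A}

theorem integrable_pow_of_memLp [IsFiniteMeasure μ] (hv : MemLp v q μ) :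
    Integrable (fun x ↦ v x ^ q) μ :=
  hv.integrable_norm_pow'.mono' (hv.aestronglyMeasurable.pow q) (.of_forall fun _ ↦ norm_pow_le _ q)

variable [NormedSpace ℝ A] [IsProbabilityMeasure μ]

theorem norm_integral_pow_sub_pow_le (hq : q ≠ 0) (hv : MemLp v q μ) (a : A) :
    ‖∫ x, (v x ^ q - a ^ q) ∂μ‖ ≤ (‖a‖ + lpNorm (fun x ↦ v x - a) q μ) ^ q - ‖a‖ ^ q := by
  have hw : MemLp (fun x ↦ v x - a) q μ := hv.sub (memLp_const a)
  have hsum : MemLp (fun x ↦ ‖a‖ + ‖v x - a‖) q μ := (memLp_const ‖a‖).add hw.norm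
  calc ‖∫ x, (v x ^ q - a ^ q) ∂μ‖ ≤ ∫ x, ((‖a‖ + ‖v x - a‖) ^ q - ‖a‖ ^ q) ∂μ :=
        norm_integral_le_of_norm_le ((integrable_pow_of_memLp hsum).sub (integrable_const _))
          (.of_forall fun x ↦ norm_pow_sub_pow_le_add_norm_sub_pow (v x) a q)
    _ = lpNorm (fun x ↦ ‖a‖ + ‖v x - a‖) q μ ^ q - ‖a‖ ^ q := by
        rw [integral_sub (integrable_pow_of_memLp hsum) (integrable_const _), integral_const,
          probReal_univ, one_smul, lpNorm_pow_eq_integral_norm_pow hsum.1 hq]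
        simp only [Real.norm_of_nonneg (add_nonneg (norm_nonneg _) (norm_nonneg _))]
    _ ≤ (‖a‖ + lpNorm (fun x ↦ v x - a) q μ) ^ q - ‖a‖ ^ q := by
        gcongr
        · exact lpNorm_nonneg
        · exact lpNorm_const_add_norm_le (norm_nonneg a) (Nat.one_le_cast.2 hq.bot_lt) hw.1

theorem mean_power_lower_bound_general [NormMulClass A] [CompleteSpace A] (hq : q ≠ 0)
    (hv : MemLp v q μ) (a : A) {ε : ℝ} (hε : 0 ≤ ε)
    (hbound : eLpNorm (fun x ↦ v x - a) q μ ≤ ENNReal.ofReal (ε * ‖a‖)) :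
    Integrable (fun x ↦ v x ^ q) μ ∧ (2 - (1 + ε) ^ q) * ‖a‖ ^ q ≤ ‖∫ x, v x ^ q ∂μ‖ := by
  have hint : Integrable (fun x ↦ v x ^ q) μ := integrable_pow_of_memLp hv
  have hfluct : lpNorm (fun x ↦ v x - a) q μ ≤ ε * ‖a‖ := by
    have hw : MemLp (fun x ↦ v x - a) q μ := hv.sub (memLp_const a)
    rw [← toReal_eLpNorm hw.1]
    exact ENNReal.toReal_le_of_le_ofReal (by positivity) hbound
  have hdiff : ‖(∫ x, v x ^ q ∂μ) - a ^ q‖ ≤ ((1 + ε) ^ q - 1) * ‖a‖ ^ q := by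
    calc ‖(∫ x, v x ^ q ∂μ) - a ^ q‖ = ‖∫ x, (v x ^ q - a ^ q) ∂μ‖ := by
          rw [integral_sub hint (integrable_const _), integral_const, probReal_univ, one_smul]
      _ ≤ (‖a‖ + lpNorm (fun x ↦ v x - a) q μ) ^ q - ‖a‖ ^ q := norm_integral_pow_sub_pow_le hq hv a
      _ ≤ (‖a‖ + ε * ‖a‖) ^ q - ‖a‖ ^ q := by
          have hnonneg : 0 ≤ lpNorm (fun x ↦ v x - a) q μ := lpNorm_nonneg
          gcongr
      _ = ((1 + ε) ^ q - 1) * ‖a‖ ^ q := by rw [← one_add_mul, mul_pow]; ring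
  have htri : ‖a‖ ^ q ≤ ‖∫ x, v x ^ q ∂μ‖ + ‖(∫ x, v x ^ q ∂μ) - a ^ q‖ := by
    simpa only [norm_pow] using norm_le_norm_add_norm_sub (∫ x, v x ^ q ∂μ) (a ^ q)
  exact ⟨hint, by linarith⟩

end

/-- Key nonlinearity estimate: if `v ∈ L^{2q}((0,1))` has mean `a` and the fluctuation `v − a`
satisfies `‖v − a‖_{L^{2q}} ≤ ε·|a|`, then `v^q` is integrable and
`|∫ v^q| ≥ (2 − (1+ε)^q)·|a|^q`. -/
theorem mean_power_lower_bound
    (q : ℕ) (hq : 2 ≤ q) (v : ℝ → ℝ)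
    (hv : MemLp v ((2 * q : ℕ) : ℝ≥0∞) (volume.restrict (Set.Ioo (0 : ℝ) 1)))
    (a : ℝ) (ha : a = ∫ x in Set.Ioo (0 : ℝ) 1, v x)
    (ε : ℝ) (hε : 0 ≤ ε)
    (hbound : eLpNorm (fun x => v x - a) ((2 * q : ℕ) : ℝ≥0∞)
        (volume.restrict (Set.Ioo (0 : ℝ) 1)) ≤ ENNReal.ofReal (ε * |a|)) :
    Integrable (fun x => (v x) ^ q) (volume.restrict (Set.Ioo (0 : ℝ) 1)) ∧
      (2 - (1 + ε) ^ q) * |a| ^ q ≤ |∫ x in Set.Ioo (0 : ℝ) 1, (v x) ^ q| := by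
  have : IsProbabilityMeasure (volume.restrict (Set.Ioo (0 : ℝ) 1)) := ⟨by simp⟩
  have hexp : (q : ℝ≥0∞) ≤ ((2 * q : ℕ) : ℝ≥0∞) := by
    exact_mod_cast Nat.le_mul_of_pos_left q two_pos
  exact mean_power_lower_bound_general (by lia) (hv.mono_exponent hexp) a hε <|
    (eLpNorm_le_eLpNorm_of_exponent_le hexp (hv.sub (memLp_const a)).1).trans hbound
end
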